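/- arXiv:math/9907162 — 2 statements merged into one kernel-verified Lean document; each statement's English description precedes it below -/
import Mathlib

section
/- Let B ⊆ ℝ² be a closed topological disk (a set homeomorphic to the closed unit disk), and let D ⊆ ℝ² be compact with connected interior such that ∂B ∩ ∂D is finite and ∂B \ ∂D meets both Int D and ℝ² \ D along arcs. Suppose ∂B = φ₁(I) ∪ φ₂(I) where φ₁, φ₂ : [0,1] → ℝ² are continuous injective maps with φ₁((0,1)) ⊆ Int D, φ₂((0,1)) ⊆ ℝ² \ D, and common endpoints φᵢ(0) = z₁, φᵢ(1) = z₂ on ∂D. Then the open set Int B ∩ Int D is path-connected. -/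
/-- Accessibility of a boundary point from an open set. -/
def Accessible {X : Type*} [TopologicalSpace X] (U : Set X) (x : X) : Prop :=
  ∃ φ : unitInterval → X, Continuous φ ∧ Function.Injective φ ∧
    (∀ t, φ t ∈ closure U) ∧ (∀ t : unitInterval, (t : ℝ) < 1 → φ t ∈ U) ∧ φ 1 = x

/-!
The arc `γ = φ₁` is a crosscut of the domain `Ω = Int D`, and `Ω \ γ` is the disjoint union of the
open sets `Int B ∩ Ω`, which is bounded, and `Ω \ B`. If `Int B ∩ Ω` were disconnected, the crosscut
would leave three open pieces, and this is impossible for the following reason.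

A continuous nonvanishing function on the circle `|z - p| = R` may fail to have a continuous
logarithm, and `(z - p) ^ k` has one only if `k = 0`. Suppose that the crosscut `γ` of `Ω` left
two bounded pieces `W₁ ∋ x₁` and `W₂ ∋ x₂` besides a piece containing `x₀`. The functions
`(z - xᵢ) / (z - x₀)` have continuous logarithms on `Ωᶜ`, because `Ω` is connected, and on `γ`,
because `γ` is an arc. As `Ωᶜ` and `γ` meet in two points only, the obstruction to gluing these
logarithms is one integer for each `i`, so a nontrivial monomial in the two functions has a
continuous logarithm on `Ωᶜ ∪ γ`, hence on the frontiers of `W₁` and `W₂`. Extending it by Tietze's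
theorem and comparing with a large circle shows that both exponents vanish, a contradiction.
-/

open Set Topology

theorem frontier_subset_compl_union {X : Type*} [TopologicalSpace X] {U V : Set X}
    (hU : IsOpen U) (hV : IsOpen V) (hUV : Disjoint U V) : frontier U ⊆ (U ∪ V)ᶜ := by
  rintro x hx (hxU | hxV)
  · exact (hU.frontier_eq ▸ hx).2 hxU
  · exact disjoint_left.1 (hUV.closure_left hV) hx.1 hxV

theorem disjoint_range_interior_of_endpoints_mem_frontier {X : Type*} [TopologicalSpace X]
    {D : Set X} {γ : unitInterval → X} (h0 : γ 0 ∈ frontier D) (h1 : γ 1 ∈ frontier D)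
    (hcompl : ∀ t : unitInterval, 0 < (t : ℝ) → (t : ℝ) < 1 → γ t ∈ Dᶜ) :
    Disjoint (range γ) (interior D) := by
  refine disjoint_left.2 ?_
  rintro _ ⟨t, rfl⟩ ht
  rcases eq_or_ne t 0 with rfl | ht0
  · exact h0.2 ht
  rcases eq_or_ne t 1 with rfl | ht1
  · exact h1.2 ht
  exact hcompl t (unitInterval.pos_iff_ne_zero.2 ht0) (unitInterval.lt_one_iff_ne_one.2 ht1)
    (interior_subset ht)

/-- `f` has a continuous logarithm on the set `s`. The logarithm is a total function, as is usual
for `ContinuousOn`; its values outside `s` are irrelevant. -/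
def HasContinuousLogOn {X : Type*} [TopologicalSpace X] (f : X → ℂ) (s : Set X) : Prop :=
  ∃ L : X → ℂ, ContinuousOn L s ∧ ∀ x ∈ s, Complex.exp (L x) = f x

namespace HasContinuousLogOn

section Basic

variable {X : Type*} [TopologicalSpace X] {f g : X → ℂ} {s t : Set X}

theorem mono (hf : HasContinuousLogOn f t) (hst : s ⊆ t) : HasContinuousLogOn f s :=
  let ⟨L, hL, hLf⟩ := hf
  ⟨L, hL.mono hst, fun x hx => hLf x (hst hx)⟩

theorem congr (hf : HasContinuousLogOn f s) (hfg : EqOn f g s) : HasContinuousLogOn g s :=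
  let ⟨L, hL, hLf⟩ := hf
  ⟨L, hL, fun x hx => (hLf x hx).trans (hfg hx)⟩

theorem inv (hf : HasContinuousLogOn f s) : HasContinuousLogOn (fun x => (f x)⁻¹) s :=
  let ⟨L, hL, hLf⟩ := hf
  ⟨fun x => -L x, hL.neg, fun x hx => by rw [Complex.exp_neg, hLf x hx]⟩

theorem mul (hf : HasContinuousLogOn f s) (hg : HasContinuousLogOn g s) :
    HasContinuousLogOn (fun x => f x * g x) s :=
  let ⟨L, hL, hLf⟩ := hf
  let ⟨M, hM, hMg⟩ := hg
  ⟨fun x => L x + M x, hL.add hM, fun x hx => by rw [Complex.exp_add, hLf x hx, hMg x hx]⟩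

theorem of_mem_slitPlane (hf : ContinuousOn f s) (h : ∀ x ∈ s, f x ∈ Complex.slitPlane) :
    HasContinuousLogOn f s :=
  ⟨fun x => Complex.log (f x), hf.clog h,
    fun x hx => Complex.exp_log (Complex.slitPlane_ne_zero (h x hx))⟩

theorem exists_continuousMap [NormalSpace X] (hf : HasContinuousLogOn f s) (hs : IsClosed s) :
    ∃ G : C(X, ℂ), ∀ x ∈ s, Complex.exp (G x) = f x := by
  obtain ⟨L, hL, hLf⟩ := hf
  obtain ⟨G, hG⟩ := ContinuousMap.exists_restrict_eq hs ⟨s.domRestrict L, hL.domRestrict⟩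
  exact ⟨G, fun x hx => (congrArg Complex.exp (DFunLike.congr_fun hG ⟨x, hx⟩)).trans (hLf x hx)⟩

theorem univ_of_ne_zero [SimplyConnectedSpace X] [LocallyPathConnectedSpace X]
    (hf : Continuous f) (hf0 : ∀ x, f x ≠ 0) : HasContinuousLogOn f univ := by
  obtain ⟨a⟩ : Nonempty X := inferInstance
  obtain ⟨L, ⟨-, hL⟩, -⟩ := Complex.isCoveringMapOn_exp.existsUnique_continuousMap_lifts
    ⟨f, hf⟩ (a₀ := a) (e₀ := Complex.log (f a)) (Complex.exp_log (hf0 a)) hf0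
  exact ⟨L, L.continuous.continuousOn, fun x _ => congrFun hL x⟩

theorem range_of_isEmbedding {γ : unitInterval → X} (hγ : IsEmbedding γ)
    (hf : ContinuousOn f (range γ)) (hf0 : ∀ x ∈ range γ, f x ≠ 0) :
    HasContinuousLogOn f (range γ) := by
  -- The covering-space lemma is applied on `ℝ`, which retracts onto the unit interval.
  obtain ⟨L, hL, hLf⟩ := univ_of_ne_zero (f := fun s : ℝ => f (γ (projIcc 0 1 zero_le_one s)))
    (hf.comp_continuous (hγ.continuous.comp continuous_projIcc) fun _ => mem_range_self _)
    fun _ => hf0 _ (mem_range_self _)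
  have hinv (t : unitInterval) : Function.invFun γ (γ t) = t :=
    Function.leftInverse_invFun hγ.injective t
  refine ⟨fun x => L (Function.invFun γ x : unitInterval), ?_, ?_⟩
  · rw [continuousOn_iff_continuous_domRestrict, ← hγ.toHomeomorph.comp_continuous_iff']
    have : Continuous fun t : unitInterval => L t :=
      (continuousOn_univ.1 hL).comp continuous_subtype_val
    refine this.congr fun t => ?_
    exact congrArg (fun t : unitInterval => L t) (hinv t).symm
  · rintro _ ⟨t, rfl⟩
    simp only [hinv, hLf _ (mem_univ _), projIcc_val]

end Basic

section Gluing

variable {X : Type*} [TopologicalSpace X] {f g : X → ℂ} {s t : Set X} {a b : X}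

theorem union_of_eqOn {L M : X → ℂ} (hs : IsClosed s) (ht : IsClosed t)
    (hL : ContinuousOn L s) (hLf : ∀ x ∈ s, Complex.exp (L x) = f x)
    (hM : ContinuousOn M t) (hMf : ∀ x ∈ t, Complex.exp (M x) = f x)
    (hLM : EqOn L M (s ∩ t)) : HasContinuousLogOn f (s ∪ t) := by
  classical
  have hs_eq : EqOn (s.piecewise L M) L s := piecewise_eqOn s L M
  have ht_eq : EqOn (s.piecewise L M) M t := fun x hx => by
    by_cases hxs : x ∈ s
    · rw [hs_eq hxs, hLM ⟨hxs, hx⟩]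
    · exact piecewise_eq_of_notMem s L M hxs
  refine ⟨s.piecewise L M, (hL.congr hs_eq).union_of_isClosed (hM.congr ht_eq) hs ht, ?_⟩
  rintro x (hx | hx)
  · rw [hs_eq hx, hLf x hx]
  · rw [ht_eq hx, hMf x hx]

theorem exists_logs_sub_eq_period (hs : HasContinuousLogOn f s) (ht : HasContinuousLogOn f t)
    (ha : a ∈ s ∩ t) (hb : b ∈ s ∩ t) :
    ∃ (L M : X → ℂ) (n : ℤ), ContinuousOn L s ∧ ContinuousOn M t ∧
      (∀ x ∈ s, Complex.exp (L x) = f x) ∧ (∀ x ∈ t, Complex.exp (M x) = f x) ∧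
      L a = M a ∧ L b = M b + n * (2 * Real.pi * Complex.I) := by
  obtain ⟨L, hL, hLf⟩ := hs
  obtain ⟨M, hM, hMf⟩ := ht
  obtain ⟨i, hi⟩ := Complex.exp_eq_exp_iff_exists_int.1 ((hLf a ha.1).trans (hMf a ha.2).symm)
  obtain ⟨j, hj⟩ := Complex.exp_eq_exp_iff_exists_int.1 ((hLf b hb.1).trans (hMf b hb.2).symm)
  refine ⟨L, fun x => M x + i * (2 * Real.pi * Complex.I), j - i, hL,
    hM.add continuousOn_const, hLf, fun x hx => ?_, hi, ?_⟩
  · rw [Complex.exp_add, Complex.exp_int_mul_two_pi_mul_I, mul_one, hMf x hx]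
  · push_cast
    linear_combination hj

theorem exists_zpow_mul_zpow_union (hs : IsClosed s) (ht : IsClosed t) (hst : s ∩ t = {a, b})
    (hfs : HasContinuousLogOn f s) (hft : HasContinuousLogOn f t)
    (hgs : HasContinuousLogOn g s) (hgt : HasContinuousLogOn g t) :
    ∃ m n : ℤ, (m ≠ 0 ∨ n ≠ 0) ∧ HasContinuousLogOn (fun x => f x ^ m * g x ^ n) (s ∪ t) := by
  have ha : a ∈ s ∩ t := hst ▸ mem_insert a {b}
  have hb : b ∈ s ∩ t := hst ▸ mem_insert_of_mem a rfl
  obtain ⟨L, M, i, hL, hM, hLf, hMf, hLMa, hLMb⟩ := hfs.exists_logs_sub_eq_period hft ha hb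
  obtain ⟨P, Q, j, hP, hQ, hPg, hQg, hPQa, hPQb⟩ := hgs.exists_logs_sub_eq_period hgt ha hb
  obtain ⟨m, n, hmn, hperiod⟩ : ∃ m n : ℤ, (m ≠ 0 ∨ n ≠ 0) ∧ m * i + n * j = 0 := by
    by_cases hi : i = 0
    · exact ⟨1, 0, Or.inl one_ne_zero, by simp [hi]⟩
    · exact ⟨j, -i, Or.inr (neg_ne_zero.2 hi), by ring⟩
  have hperiod' : (m : ℂ) * i + n * j = 0 := by exact_mod_cast hperiod
  refine ⟨m, n, hmn, union_of_eqOn (L := fun x => m * L x + n * P x)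
    (M := fun x => m * M x + n * Q x) hs ht (by fun_prop) ?_ (by fun_prop) ?_ ?_⟩
  · intro x hx
    rw [Complex.exp_add, Complex.exp_int_mul, Complex.exp_int_mul, hLf x hx, hPg x hx]
  · intro x hx
    rw [Complex.exp_add, Complex.exp_int_mul, Complex.exp_int_mul, hMf x hx, hQg x hx]
  · rw [hst]
    rintro x (rfl | rfl)
    · simp only [hLMa, hPQa]
    · simp only [hLMb, hPQb]
      linear_combination (2 * Real.pi * Complex.I) * hperiod'

end Gluing

section Plane

theorem sub_div_sub_compl_of_isPreconnected {Ω : Set ℂ} (hΩ : IsOpen Ω)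
    (hΩc : IsPreconnected Ω) {p q : ℂ} (hp : p ∈ Ω) (hq : q ∈ Ω) :
    HasContinuousLogOn (fun z => (z - p) / (z - q)) Ωᶜ := by
  have hne {x z : ℂ} (hx : x ∈ Ω) (hz : z ∈ Ωᶜ) : z - x ≠ 0 :=
    sub_ne_zero.2 fun h => hz (h ▸ hx)
  refine hΩc.induction₂ (fun p q => HasContinuousLogOn (fun z => (z - p) / (z - q)) Ωᶜ)
    (fun q hq => ?_) (fun x y z _ hy _ hxy hyz => ?_) (fun x y _ _ hxy => ?_) hp hq
  · obtain ⟨r, hr, hball⟩ := Metric.isOpen_iff.1 hΩ q hq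
    filter_upwards [mem_nhdsWithin_of_mem_nhds (Metric.ball_mem_nhds q hr)] with p hp
    refine HasContinuousLogOn.congr (inv (of_mem_slitPlane (f := fun z => (z - p) / (z - q))
      (ContinuousOn.div (by fun_prop) (by fun_prop) fun z hz => hne hq hz) fun z hz => ?_))
      fun z _ => inv_div _ _
    have hlt : ‖(q - p) / (z - q)‖ < 1 := by
      rw [norm_div, div_lt_one (norm_pos_iff.2 (hne hq hz)), ← dist_eq_norm, ← dist_eq_norm,
        dist_comm q p]
      exact (Metric.mem_ball.1 hp).trans_le (not_lt.1 fun hzr => hz (hball hzr))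
    convert Complex.mem_slitPlane_of_norm_lt_one hlt using 1
    rw [one_add_div (hne hq hz), sub_add_sub_cancel]
  · refine (hxy.mul hyz).congr fun w hw => ?_
    exact div_mul_div_cancel₀ (hne hy hw)
  · exact hxy.inv.congr fun w _ => inv_div _ _

theorem eq_zero_of_sphere {p : ℂ} {R : ℝ} (hR : 0 < R) {k : ℤ}
    (h : HasContinuousLogOn (fun z => (z - p) ^ k) (Metric.sphere p R)) : k = 0 := by
  obtain ⟨L, hL, hLk⟩ := h
  have hmem (θ : ℝ) : circleMap p R θ ∈ Metric.sphere p R := circleMap_mem_sphere p hR.le θ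
  have hLc : Continuous fun θ => L (circleMap p R θ) :=
    hL.comp_continuous (continuous_circleMap p R) hmem
  have hexp (θ : ℝ) :
      Complex.exp (L (circleMap p R θ) - k * (θ * Complex.I)) = (R : ℂ) ^ k := by
    simp only [Complex.exp_sub, hLk _ (hmem θ), Complex.exp_int_mul, circleMap_sub_center,
      circleMap_zero, mul_zpow, mul_div_cancel_right₀ _ (zpow_ne_zero k (Complex.exp_ne_zero _))]
  have hcont : Continuous fun θ : ℝ => L (circleMap p R θ) - k * (θ * Complex.I) :=
    hLc.sub (by fun_prop)
  have hconst := Complex.isCoveringMap_exp.const_of_comp hcont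
    (fun θ θ' => Subtype.ext ((hexp θ).trans (hexp θ').symm)) (2 * Real.pi) 0
  have hperiod : circleMap p R (2 * Real.pi) = circleMap p R 0 := (periodic_circleMap p R).eq
  simpa [hperiod, Real.pi_ne_zero] using hconst

theorem eq_zero_of_frontier {W : Set ℂ} (hW : IsOpen W) (hWb : Bornology.IsBounded W) {p : ℂ}
    (hp : p ∈ W) {g : ℂ → ℂ} (hg : ContinuousOn g (closure W)) (hg0 : ∀ z ∈ closure W, g z ≠ 0)
    {k : ℤ} (h : HasContinuousLogOn (fun z => (z - p) ^ k * g z) (frontier W)) : k = 0 := by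
  classical
  obtain ⟨G, hG⟩ := h.exists_continuousMap isClosed_frontier
  have hne {z : ℂ} (hz : z ∉ W) : z - p ≠ 0 := sub_ne_zero.2 fun h => hz (h ▸ hp)
  let F : ℂ → ℂ := W.piecewise (fun z => Complex.exp (-G z) * g z) (fun z => ((z - p) ^ k)⁻¹)
  have hF_of_notMem : EqOn F (fun z => ((z - p) ^ k)⁻¹) Wᶜ := piecewise_eqOn_compl W _ _
  have hFc : Continuous F := by
    refine continuous_piecewise (fun z hz => ?_) ?_ ?_
    · have hzp := zpow_ne_zero k (hne (hW.frontier_eq ▸ hz).2)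
      rw [Complex.exp_neg, hG z hz]
      field_simp [hg0 z hz.1]
    · fun_prop
    · rw [hW.isClosed_compl.closure_eq]
      exact (ContinuousOn.zpow₀ (by fun_prop) k fun z hz => Or.inl (hne hz)).inv₀
        fun z hz => zpow_ne_zero k (hne hz)
  have hF0 (z : ℂ) : F z ≠ 0 := by
    by_cases hz : z ∈ W
    · rw [show F z = _ from piecewise_eq_of_mem W _ _ hz]
      exact mul_ne_zero (Complex.exp_ne_zero _) (hg0 z (subset_closure hz))
    · rw [hF_of_notMem hz]
      exact inv_ne_zero (zpow_ne_zero k (hne hz))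
  obtain ⟨R, hR, hWR⟩ := hWb.subset_ball_lt 0 p
  have hsphere : Metric.sphere p R ⊆ Wᶜ := fun z hz hzW =>
    (Metric.mem_ball.1 (hWR hzW)).ne (Metric.mem_sphere.1 hz)
  have hlog : HasContinuousLogOn F (Metric.sphere p R) :=
    (univ_of_ne_zero hFc hF0).mono (subset_univ _)
  exact eq_zero_of_sphere hR
    (hlog.inv.congr fun z hz => by simp only [hF_of_notMem (hsphere hz), inv_inv])

theorem eq_zero_of_compl_union {U V : Set ℂ} (hU : IsOpen U) (hV : IsOpen V)
    (hUV : Disjoint U V) (hUb : Bornology.IsBounded U) {p q r : ℂ} (hp : p ∈ U) (hq : q ∈ V)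
    (hr : r ∈ V) {m n : ℤ}
    (h : HasContinuousLogOn (fun z => ((z - p) / (z - q)) ^ m * ((z - r) / (z - q)) ^ n)
      (U ∪ V)ᶜ) : m = 0 := by
  have hne {x z : ℂ} (hx : x ∈ V) (hz : z ∈ closure U) : z - x ≠ 0 :=
    sub_ne_zero.2 fun hzx => disjoint_left.1 (hUV.closure_left hV) hz (hzx ▸ hx)
  have hfrontier := h.mono (frontier_subset_compl_union hU hV hUV)
  refine eq_zero_of_frontier hU hUb hp
    (g := fun z => ((z - q) ^ m)⁻¹ * ((z - r) / (z - q)) ^ n) ?_ (fun z hz => ?_)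
    (hfrontier.congr fun z _ => ?_)
  · exact ((ContinuousOn.zpow₀ (by fun_prop) m fun z hz => Or.inl (hne hq hz)).inv₀
      fun z hz => zpow_ne_zero m (hne hq hz)).mul
      ((ContinuousOn.div (by fun_prop) (by fun_prop) fun z hz => hne hq hz).zpow₀ n
        fun z hz => Or.inl (div_ne_zero (hne hr hz) (hne hq hz)))
  · exact mul_ne_zero (inv_ne_zero (zpow_ne_zero m (hne hq hz)))
      (zpow_ne_zero n (div_ne_zero (hne hr hz) (hne hq hz)))
  · simp only [div_zpow, div_eq_mul_inv ((z - p) ^ m), mul_assoc]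

end Plane

end HasContinuousLogOn

/-- `γ` is a crosscut of `Ω`: an arc whose interior points lie in `Ω` and whose endpoints do not.
For open `Ω` the endpoints then lie on the frontier of `Ω`. -/
structure IsCrosscut_s5 {X : Type*} [TopologicalSpace X] (Ω : Set X) (γ : unitInterval → X) :
    Prop where
  continuous : Continuous γ
  injective : Function.Injective γ
  mem_iff : ∀ t, γ t ∈ Ω ↔ 0 < t ∧ t < 1

namespace IsCrosscut_s5

section General

variable {X : Type*} [TopologicalSpace X] {Ω : Set X} {γ : unitInterval → X}

theorem isClosedEmbedding [T2Space X] (hγ : IsCrosscut_s5 Ω γ) : IsClosedEmbedding γ :=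
  hγ.continuous.isClosedEmbedding hγ.injective

theorem compl_inter_range (hγ : IsCrosscut_s5 Ω γ) : Ωᶜ ∩ range γ = {γ 0, γ 1} := by
  ext x
  constructor
  · rintro ⟨hx, t, rfl⟩
    rw [mem_compl_iff, hγ.mem_iff, unitInterval.pos_iff_ne_zero, unitInterval.lt_one_iff_ne_one,
      not_and_or, not_not, not_not] at hx
    exact hx.imp (congrArg γ) (congrArg γ)
  · rintro (rfl | rfl)
    · exact ⟨fun h => ((hγ.mem_iff 0).1 h).1.false, mem_range_self 0⟩
    · exact ⟨fun h => ((hγ.mem_iff 1).1 h).2.false, mem_range_self 1⟩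

theorem nonempty_range_inter (hγ : IsCrosscut_s5 Ω γ) : (range γ ∩ Ω).Nonempty :=
  let ⟨t, ht⟩ := exists_between (zero_lt_one (α := unitInterval))
  ⟨γ t, mem_range_self t, (hγ.mem_iff t).2 ht⟩

theorem comp_homeomorph {Y : Type*} [TopologicalSpace Y] (hγ : IsCrosscut_s5 Ω γ) (e : Y ≃ₜ X) :
    IsCrosscut_s5 (e ⁻¹' Ω) (e.symm ∘ γ) where
  continuous := e.symm.continuous.comp hγ.continuous
  injective := e.symm.injective.comp hγ.injective
  mem_iff t := by simp [hγ.mem_iff]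

theorem of_endpoints_mem_frontier {D : Set X} (hc : Continuous γ) (hi : Function.Injective γ)
    (h0 : γ 0 ∈ frontier D) (h1 : γ 1 ∈ frontier D)
    (hint : ∀ t : unitInterval, 0 < (t : ℝ) → (t : ℝ) < 1 → γ t ∈ interior D) :
    IsCrosscut_s5 (interior D) γ where
  continuous := hc
  injective := hi
  mem_iff t := by
    refine ⟨fun ht => ⟨?_, ?_⟩, fun ht => hint t ht.1 ht.2⟩
    · exact unitInterval.pos_iff_ne_zero.2 fun h => h0.2 (h ▸ ht)
    · exact unitInterval.lt_one_iff_ne_one.2 fun h => h1.2 (h ▸ ht)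

end General

section Plane

variable {Ω : Set ℂ} {γ : unitInterval → ℂ}

theorem exists_zpow_mul_zpow_hasContinuousLogOn (hγ : IsCrosscut_s5 Ω γ) (hΩ : IsOpen Ω)
    (hΩc : IsPreconnected Ω) {x₀ x₁ x₂ : ℂ} (h₀ : x₀ ∈ Ω \ range γ) (h₁ : x₁ ∈ Ω \ range γ)
    (h₂ : x₂ ∈ Ω \ range γ) :
    ∃ m n : ℤ, (m ≠ 0 ∨ n ≠ 0) ∧ HasContinuousLogOn
      (fun z => ((z - x₁) / (z - x₀)) ^ m * ((z - x₂) / (z - x₀)) ^ n) (Ω \ range γ)ᶜ := by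
  have hne {x z : ℂ} (hx : x ∈ Ω \ range γ) (hz : z ∈ range γ) : z - x ≠ 0 :=
    sub_ne_zero.2 fun h => hx.2 (h ▸ hz)
  have hlog_compl {x : ℂ} (hx : x ∈ Ω \ range γ) :
      HasContinuousLogOn (fun z => (z - x) / (z - x₀)) Ωᶜ :=
    .sub_div_sub_compl_of_isPreconnected hΩ hΩc hx.1 h₀.1
  have hlog_range {x : ℂ} (hx : x ∈ Ω \ range γ) :
      HasContinuousLogOn (fun z => (z - x) / (z - x₀)) (range γ) :=
    .range_of_isEmbedding hγ.isClosedEmbedding.isEmbedding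
      (ContinuousOn.div (by fun_prop) (by fun_prop) fun z hz => hne h₀ hz)
      fun z hz => div_ne_zero (hne hx hz) (hne h₀ hz)
  rw [sdiff_eq, compl_inter, compl_compl]
  exact HasContinuousLogOn.exists_zpow_mul_zpow_union hΩ.isClosed_compl
    hγ.isClosedEmbedding.isClosed_range hγ.compl_inter_range (hlog_compl h₁) (hlog_range h₁)
    (hlog_compl h₂) (hlog_range h₂)

theorem isPreconnected_of_union_eq (hγ : IsCrosscut_s5 Ω γ) (hΩ : IsOpen Ω)
    (hΩc : IsPreconnected Ω) {U V : Set ℂ} (hU : IsOpen U) (hV : IsOpen V) (hUV : Disjoint U V)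
    (hUb : Bornology.IsBounded U) (hVne : V.Nonempty) (hunion : U ∪ V = Ω \ range γ) :
    IsPreconnected U := by
  rintro u v hu hv huv ⟨x₁, hx₁⟩ ⟨x₂, hx₂⟩
  obtain ⟨x₀, hx₀⟩ := hVne
  by_contra hempty
  have huv_disj : Disjoint (U ∩ u) (U ∩ v) :=
    disjoint_left.2 fun x hxu hxv => hempty ⟨x, hxu.1, hxu.2, hxv.2⟩
  have hsub : U ∪ V ⊆ Ω \ range γ := hunion.subset
  have hUu : IsOpen (U ∩ u) := hU.inter hu
  have hUv : IsOpen (U ∩ v) := hU.inter hv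
  have hu_disj : Disjoint (U ∩ u) (U ∩ v ∪ V) :=
    huv_disj.union_right (hUV.mono_left inter_subset_left)
  have hv_disj : Disjoint (U ∩ v) (U ∩ u ∪ V) :=
    huv_disj.symm.union_right (hUV.mono_left inter_subset_left)
  have hu_union : U ∩ u ∪ (U ∩ v ∪ V) = Ω \ range γ := by
    rw [← union_assoc, ← inter_union_distrib_left, inter_eq_left.2 huv, hunion]
  have hv_union : U ∩ v ∪ (U ∩ u ∪ V) = Ω \ range γ := by rw [union_left_comm, hu_union]
  obtain ⟨m, n, hmn, hlog⟩ := hγ.exists_zpow_mul_zpow_hasContinuousLogOn hΩ hΩc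
    (hsub (Or.inr hx₀)) (hsub (Or.inl hx₁.1)) (hsub (Or.inl hx₂.1))
  have hm : m = 0 := HasContinuousLogOn.eq_zero_of_compl_union hUu (hUv.union hV) hu_disj
    (hUb.subset inter_subset_left) hx₁ (Or.inr hx₀) (Or.inl hx₂) (hu_union ▸ hlog)
  have hn : n = 0 := HasContinuousLogOn.eq_zero_of_compl_union hUv (hUu.union hV) hv_disj
    (hUb.subset inter_subset_left) hx₂ (Or.inr hx₀) (Or.inl hx₁)
    (hv_union ▸ hlog.congr fun z _ => mul_comm _ _)
  exact hmn.elim (· hm) (· hn)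

end Plane

end IsCrosscut_s5

section Disk

variable {E : Type*} [NormedAddCommGroup E] [NormedSpace ℝ E]

theorem exists_apply_neg_eq_of_sphere (hE : 1 < Module.rank ℝ E) {r : ℝ} (hr : 0 ≤ r)
    {f : Metric.sphere (0 : E) r → ℝ} (hf : Continuous f) : ∃ v, f (-v) = f v := by
  have : Nontrivial E := rank_pos_iff_nontrivial.1 (zero_lt_one.trans hE)
  have : PreconnectedSpace (Metric.sphere (0 : E) r) :=
    Subtype.preconnectedSpace (isPreconnected_sphere hE 0 r)
  obtain ⟨v⟩ : Nonempty (Metric.sphere (0 : E) r) := (NormedSpace.sphere_nonempty.2 hr).to_subtype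
  rcases le_total (f (-v)) (f v) with h | h
  · exact intermediate_value_univ₂ (b := -v) (hf.comp continuous_neg) hf h (by simpa using h)
  · exact intermediate_value_univ₂ (a := -v) (hf.comp continuous_neg) hf (by simpa using h) h

theorem not_injective_of_interior_nonempty (hE : 1 < Module.rank ℝ E) {s : Set E}
    (hs : (interior s).Nonempty) {f : s → ℝ} (hf : Continuous f) : ¬Function.Injective f := by
  intro hinj
  obtain ⟨c, hc⟩ := hs
  obtain ⟨r, hr, hrs⟩ := Metric.nhds_basis_closedBall.mem_iff.1 (mem_interior_iff_mem_nhds.1 hc)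
  have hmem (v : Metric.sphere (0 : E) r) : c + v ∈ s := hrs (by simp)
  obtain ⟨v, hv⟩ := exists_apply_neg_eq_of_sphere hE hr.le
    (f := fun v => f ⟨c + v, hmem v⟩) (by fun_prop)
  have hneg : -v = v := Subtype.ext (add_left_cancel (congrArg Subtype.val (hinj hv)))
  exact ne_neg_of_mem_sphere ℝ hr.ne' v hneg.symm

theorem not_subset_range_of_homeomorph_closedBall {X : Type*} [TopologicalSpace X]
    (hE : 1 < Module.rank ℝ E) {c : E} {r : ℝ} (hr : r ≠ 0) {B U : Set X}
    (ψ : B ≃ₜ Metric.closedBall c r) (hU : IsOpen U) (hBU : (B ∩ U).Nonempty)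
    {γ : unitInterval → X} (hγ : IsEmbedding γ) : ¬B ∩ U ⊆ range γ := by
  intro hsub
  obtain ⟨O, hO, hOU⟩ := isOpen_induced_iff.1
    (hU.preimage (continuous_subtype_val.comp ψ.symm.continuous))
  have hmem (y : Metric.closedBall c r) : (y : E) ∈ O ↔ (ψ.symm y : X) ∈ U :=
    Set.ext_iff.1 hOU y
  let s : Set E := Metric.closedBall c r ∩ O
  have hs : (interior s).Nonempty := by
    obtain ⟨x, hxB, hxU⟩ := hBU
    have hx : (ψ ⟨x, hxB⟩ : E) ∈ closure (Metric.ball c r) := by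
      rw [closure_ball c hr]
      exact (ψ ⟨x, hxB⟩).2
    obtain ⟨y, hyO, hyb⟩ := mem_closure_iff.1 hx O hO ((hmem _).2 (by simpa using hxU))
    exact ⟨y, interior_maximal (inter_subset_inter_left O Metric.ball_subset_closedBall)
      (Metric.isOpen_ball.inter hO) ⟨hyb, hyO⟩⟩
  let toArc (y : s) : range γ :=
    ⟨ψ.symm ⟨y, y.2.1⟩, hsub ⟨Subtype.coe_prop _, (hmem ⟨y, y.2.1⟩).1 y.2.2⟩⟩
  have htoArc : Function.Injective toArc := fun y y' h =>
    Subtype.ext (by simpa [toArc, Subtype.val_inj] using h)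
  refine not_injective_of_interior_nonempty hE hs
    (f := fun y => (hγ.toHomeomorph.symm (toArc y) : unitInterval)) (by fun_prop) ?_
  exact Subtype.val_injective.comp (hγ.toHomeomorph.symm.injective.comp htoArc)

theorem interior_inter_nonempty_of_homeomorph_closedBall {X : Type*} [TopologicalSpace X]
    (hE : 1 < Module.rank ℝ E) {c : E} {r : ℝ} (hr : r ≠ 0) {B U : Set X}
    (ψ : B ≃ₜ Metric.closedBall c r) (hU : IsOpen U) (hBU : (B ∩ U).Nonempty)
    {γ : unitInterval → X} (hγ : IsEmbedding γ) (hfr : frontier B ∩ U ⊆ range γ) :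
    (interior B ∩ U).Nonempty := by
  by_contra hempty
  refine not_subset_range_of_homeomorph_closedBall hE hr ψ hU hBU hγ fun x hx => ?_
  exact hfr ⟨⟨subset_closure hx.1, fun hxi => hempty ⟨x, hxi, hx.2⟩⟩, hx.2⟩

end Disk

theorem IsCrosscut_s5.isPathConnected_interior_inter {E : Type*} [NormedAddCommGroup E]
    [NormedSpace ℝ E] (hE : Module.finrank ℝ E = 2) {Ω B : Set E} {γ : unitInterval → E}
    (hγ : IsCrosscut_s5 Ω γ) (hΩ : IsOpen Ω) (hΩc : IsPreconnected Ω) (hB : IsCompact B)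
    (hfr : frontier B ∩ Ω = range γ ∩ Ω) (hne : (interior B ∩ Ω).Nonempty) :
    IsPathConnected (interior B ∩ Ω) := by
  have : FiniteDimensional ℝ E := .of_finrank_pos (hE ▸ two_pos)
  let e : ℂ ≃ₜ E :=
    (ContinuousLinearEquiv.ofFinrankEq (Complex.finrank_real_complex.trans hE.symm)).toHomeomorph
  have hopen : IsOpen (interior B ∩ Ω) := isOpen_interior.inter hΩ
  have hdisj : Disjoint (interior B ∩ Ω) (Ω \ B) :=
    disjoint_left.2 fun x hx hx' => hx'.2 (interior_subset hx.1)
  have houter : (Ω \ B).Nonempty := by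
    obtain ⟨x, hx⟩ := hγ.nonempty_range_inter
    have hxfr : x ∈ frontier B := (hfr.symm.subset hx).1
    have hxB : x ∈ closure Bᶜ := (frontier_eq_closure_inter_closure (s := B) ▸ hxfr).2
    obtain ⟨y, hyΩ, hyB⟩ := mem_closure_iff.1 hxB Ω hΩ hx.2
    exact ⟨y, hyΩ, hyB⟩
  have hunion : interior B ∩ Ω ∪ Ω \ B = Ω \ range γ := by
    rw [← sdiff_inter_self_eq_sdiff (t := range γ), ← hfr, sdiff_inter_self_eq_sdiff,
      hB.isClosed.frontier_eq, sdiff_sdiff_right, union_comm, inter_comm]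
  have hpre : IsPreconnected (e ⁻¹' (interior B ∩ Ω)) :=
    (hγ.comp_homeomorph e).isPreconnected_of_union_eq (hΩ.preimage e.continuous)
      (e.isPreconnected_preimage.2 hΩc) (hopen.preimage e.continuous)
      ((hΩ.sdiff hB.isClosed).preimage e.continuous) (hdisj.preimage e)
      ((e.isCompact_preimage.2 hB).isBounded.subset
        (preimage_mono (inter_subset_left.trans interior_subset)))
      (houter.preimage e.surjective) (by
        rw [← preimage_union, hunion, range_comp, preimage_sdiff, e.image_symm])
  exact hopen.isConnected_iff_isPathConnected.1 ⟨hne, e.isPreconnected_preimage.1 hpre⟩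

theorem interior_cap_interior_pathConnected_general {E : Type*} [NormedAddCommGroup E]
    [NormedSpace ℝ E] (hE : Module.finrank ℝ E = 2) {Ω B S : Set E} (hΩ : IsOpen Ω)
    (hΩc : IsPreconnected Ω) {γ : unitInterval → E} (hγ : IsCrosscut_s5 Ω γ) (hS : Disjoint S Ω)
    {c : E} {r : ℝ} (hr : r ≠ 0) (ψ : B ≃ₜ Metric.closedBall c r)
    (hfrontier : frontier B = range γ ∪ S) : IsPathConnected (interior B ∩ Ω) := by
  have : FiniteDimensional ℝ E := .of_finrank_pos (hE ▸ two_pos)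
  have : ProperSpace E := FiniteDimensional.proper_real E
  have hB : IsCompact B := isCompact_iff_compactSpace.2 ψ.symm.compactSpace
  have hfr : frontier B ∩ Ω = range γ ∩ Ω := by
    rw [hfrontier, union_inter_distrib_right, hS.inter_eq, union_empty]
  have hBΩ : (B ∩ Ω).Nonempty :=
    (hfr.symm ▸ hγ.nonempty_range_inter).mono
      (inter_subset_inter_left Ω hB.isClosed.frontier_subset)
  have hrank : 1 < Module.rank ℝ E := by simp [← Module.finrank_eq_rank, hE]
  exact hγ.isPathConnected_interior_inter hE hΩ hΩc hB hfr
    (interior_inter_nonempty_of_homeomorph_closedBall hrank hr ψ hΩ hBΩ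
      hγ.isClosedEmbedding.isEmbedding (hfr.trans_subset inter_subset_left))

/-- If `B` is a closed topological disk whose boundary is the Jordan curve obtained by
concatenating an arc `φ₁` through the interior of `D` and an arc `φ₂` through the complement
of `D`, meeting at two boundary points of `D`, then `Int B ∩ Int D` is path-connected. -/
theorem interior_cap_interior_pathConnected
    (D B : Set (EuclideanSpace ℝ (Fin 2))) (hD : IsCompact D)
    (hint : IsConnected (interior D)) (hcompl : IsConnected Dᶜ)
    (hacc₁ : ∀ x ∈ frontier D, Accessible (interior D) x)
    (hacc₂ : ∀ x ∈ frontier D, Accessible Dᶜ x)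
    (φ₁ φ₂ : unitInterval → EuclideanSpace ℝ (Fin 2))
    (hc₁ : Continuous φ₁) (hc₂ : Continuous φ₂)
    (hi₁ : Function.Injective φ₁) (hi₂ : Function.Injective φ₂)
    (z₁ z₂ : EuclideanSpace ℝ (Fin 2)) (hz₁ : z₁ ∈ frontier D) (hz₂ : z₂ ∈ frontier D)
    (hz : z₁ ≠ z₂)
    (h₁0 : φ₁ 0 = z₁) (h₁1 : φ₁ 1 = z₂) (h₂0 : φ₂ 0 = z₁) (h₂1 : φ₂ 1 = z₂)
    (h₁int : ∀ t : unitInterval, 0 < (t : ℝ) → (t : ℝ) < 1 → φ₁ t ∈ interior D)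
    (h₂int : ∀ t : unitInterval, 0 < (t : ℝ) → (t : ℝ) < 1 → φ₂ t ∈ Dᶜ)
    (hBclosed : IsClosed B)
    (hBdisk : Nonempty (B ≃ₜ (Metric.closedBall (0 : EuclideanSpace ℝ (Fin 2)) 1)))
    (hBfront : frontier B = Set.range φ₁ ∪ Set.range φ₂) :
    IsPathConnected (interior B ∩ interior D) := by
  have hφ₁ : IsCrosscut_s5 (interior D) φ₁ :=
    .of_endpoints_mem_frontier hc₁ hi₁ (h₁0 ▸ hz₁) (h₁1 ▸ hz₂) h₁int
  have hφ₂ : Disjoint (range φ₂) (interior D) :=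
    disjoint_range_interior_of_endpoints_mem_frontier (h₂0 ▸ hz₁) (h₂1 ▸ hz₂) h₂int
  obtain ⟨ψ⟩ := hBdisk
  exact interior_cap_interior_pathConnected_general finrank_euclideanSpace_fin isOpen_interior
    hint.isPreconnected hφ₁ hφ₂ one_ne_zero ψ hBfront
end

section
/- With the standard square decomposition I² = D₁ ∪ D₂ ∪ K (as in the main construction), let x, y ∈ K \ {a,b} with x ≠ y, and let φₓ : [0,1] → I² be a crosscut through x (bottom edge to top edge, passing through x at parameter 1/2, with φₓ([0,1/2)) ⊆ D₁ and φₓ((1/2,1]) ⊆ D₂). Then there exists a crosscut φ_y through y with the same properties such that φₓ([0,1]) ∩ φ_y([0,1]) = ∅. -/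
/-- The unit square `I² = [0,1] × [0,1]` in the plane. -/
def unitSq : Set (ℝ × ℝ) := Set.Icc (0, 0) (1, 1)

/-- The open bottom edge `(0,1) × {0}` of the unit square. -/
def botEdge : Set (ℝ × ℝ) := {p | p.1 ∈ Set.Ioo (0 : ℝ) 1 ∧ p.2 = 0}

/-- The open top edge `(0,1) × {1}` of the unit square. -/
def topEdge : Set (ℝ × ℝ) := {p | p.1 ∈ Set.Ioo (0 : ℝ) 1 ∧ p.2 = 1}

/-- The open left edge `{0} × (0,1)` of the unit square. -/
def leftEdge : Set (ℝ × ℝ) := {p | p.1 = 0 ∧ p.2 ∈ Set.Ioo (0 : ℝ) 1}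

/-- The open right edge `{1} × (0,1)` of the unit square. -/
def rightEdge : Set (ℝ × ℝ) := {p | p.1 = 1 ∧ p.2 ∈ Set.Ioo (0 : ℝ) 1}

/-- The midpoint parameter `1/2` of the unit interval. -/
noncomputable def half : unitInterval := ⟨1/2, by constructor <;> norm_num⟩

/-- A *crosscut* of the square through `x` (relative to the decomposition pieces `D₁`, `D₂`):
a continuous injective path from the open bottom edge to the open top edge, passing through
`x` at parameter `1/2`, lying in the open square except for its endpoints, with its first
half in `D₁` and its second half in `D₂`. -/
def IsCrosscut (D₁ D₂ : Set (ℝ × ℝ)) (x : ℝ × ℝ) (φ : unitInterval → ℝ × ℝ) : Prop :=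
  Continuous φ ∧ Function.Injective φ ∧ φ 0 ∈ botEdge ∧ φ 1 ∈ topEdge ∧ φ half = x ∧
    (∀ t : unitInterval, 0 < (t : ℝ) → (t : ℝ) < 1 → φ t ∈ interior unitSq) ∧
    (∀ t : unitInterval, (t : ℝ) < 1/2 → φ t ∈ D₁) ∧
    (∀ t : unitInterval, 1/2 < (t : ℝ) → φ t ∈ D₂)

/-- The standard square decomposition `I² = D₁ ∪ D₂ ∪ K`. -/
structure SqDecomp (D₁ D₂ K : Set (ℝ × ℝ)) (a b : ℝ × ℝ) : Prop where
  cover : unitSq = D₁ ∪ D₂ ∪ K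
  disj : Disjoint D₁ D₂
  open₁ : ∃ U, IsOpen U ∧ D₁ = U ∩ unitSq
  open₂ : ∃ U, IsOpen U ∧ D₂ = U ∩ unitSq
  pconn₁ : IsPathConnected D₁
  pconn₂ : IsPathConnected D₂
  front₁ : K = closure D₁ \ D₁
  front₂ : K = closure D₂ \ D₂
  acc₁ : ∀ x ∈ K, Accessible D₁ x
  acc₂ : ∀ x ∈ K, Accessible D₂ x
  bdry : K ∩ frontier unitSq = {a, b}
  ha : a ∈ leftEdge
  hb : b ∈ rightEdge

/-!
Cut the given crosscut at `x` into a half `ψ` in `D₁` and a half in `D₂`. Let `R` be the set of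
points reached from `y` by arcs in the part of `D₁` in the open square that avoid `ψ`. If no such
arc could be continued to the boundary edge on which `ψ` starts, the frontier of `R` would lie in
the union of `ψ` and the complement of `D₁`, and this union would separate points of `D₁` near `y`
from points just outside the square. But neither part separates them, and the two meet only in `x`,
so this contradicts Janiszewski's theorem, for which Borsuk's argument applies: `(z - p) / (z - q)`
has a continuous logarithm on either part, and the two logarithms glue along the connected
intersection. Hence `y` is joined to the bottom edge within `D₁` and likewise to the top edge within
`D₂`; the two arcs together form the crosscut through `y`.
-/

open Set Filter Topology unitInterval

/-! ### Logarithms of `(z - p) / (z - q)` and plane separation -/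

theorem exists_continuous_log {A : Type*} [TopologicalSpace A] [SimplyConnectedSpace A]
    [LocallyPathConnectedSpace A] (f : C(A, ℂ)) (hf : ∀ a, f a ≠ 0) :
    ∃ k : C(A, ℂ), ∀ a, Complex.exp (k a) = f a := by
  obtain ⟨a₀⟩ : Nonempty A := inferInstance
  obtain ⟨k, ⟨-, hk⟩, -⟩ := Complex.isCoveringMapOn_exp.existsUnique_continuousMap_lifts f
    (a₀ := a₀) (e₀ := Complex.log (f a₀)) (Complex.exp_log (hf a₀)) hf
  exact ⟨k, congrFun hk⟩

/-- A continuous logarithm of `h` would turn the angle on the circle into a function of the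
point. -/
theorem exists_eq_zero_of_eq_sub_on_sphere {h : ℂ → ℂ} (hc : Continuous h) {p : ℂ} {r : ℝ}
    (hr : 0 < r) (hh : ∀ z, dist z p = r → h z = z - p) : ∃ z, h z = 0 := by
  by_contra! hne
  obtain ⟨k, hk⟩ := exists_continuous_log ⟨h, hc⟩ hne
  have hexp : ∀ θ : ℝ, Complex.exp (k (circleMap p r θ) - θ * Complex.I) = r := fun θ => by
    have hcircle : h (circleMap p r θ) = r * Complex.exp (θ * Complex.I) := by
      rw [hh _ (by simp [circleMap, abs_of_pos hr, dist_eq_norm]), circleMap, add_sub_cancel_left]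
    rw [Complex.exp_sub, hk, ContinuousMap.coe_mk, hcircle,
      mul_div_cancel_right₀ _ (Complex.exp_ne_zero _)]
  have hcont : Continuous fun θ : ℝ => k (circleMap p r θ) - θ * Complex.I := by
    have := continuous_circleMap p r
    fun_prop
  have hconst := Complex.isCoveringMap_exp.const_of_comp hcont
    (fun θ θ' => Subtype.ext (by simp only [hexp])) 0 (2 * Real.pi)
  rw [show circleMap p r (2 * Real.pi) = circleMap p r 0 by simp [circleMap]] at hconst
  push_cast at hconst
  exact Complex.two_pi_I_ne_zero (by linear_combination hconst)

/-- The function `z ↦ (z - p) / (z - q)` has a continuous logarithm on `X`. For compact `X` this is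
Borsuk's criterion for `p` and `q` not being separated by `X`. Since division by zero gives `0`,
the equation forces `p ∉ X` and `q ∉ X`. -/
def HasLogRatio (X : Set ℂ) (p q : ℂ) : Prop :=
  ∃ g : ℂ → ℂ, ContinuousOn g X ∧ ∀ z ∈ X, Complex.exp (g z) = (z - p) / (z - q)

namespace HasLogRatio

variable {X Y : Set ℂ} {p q r : ℂ}

theorem sub_right_ne_zero (h : HasLogRatio X p q) {z : ℂ} (hz : z ∈ X) : z - q ≠ 0 := by
  obtain ⟨g, -, h⟩ := h
  intro h0
  exact Complex.exp_ne_zero (g z) (by rw [h z hz, h0, div_zero])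

theorem symm (h : HasLogRatio X p q) : HasLogRatio X q p := by
  obtain ⟨g, hg, h⟩ := h
  exact ⟨fun z => -g z, hg.neg, fun z hz => by rw [Complex.exp_neg, h z hz, inv_div]⟩

theorem trans (h : HasLogRatio X p q) (h' : HasLogRatio X q r) : HasLogRatio X p r := by
  have hne {z : ℂ} (hz : z ∈ X) := h.sub_right_ne_zero hz
  obtain ⟨g, hg, h⟩ := h
  obtain ⟨g', hg', h'⟩ := h'
  exact ⟨fun z => g z + g' z, hg.add hg', fun z hz => by
    rw [Complex.exp_add, h z hz, h' z hz, div_mul_div_cancel₀ (hne hz)]⟩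

/-- Two logarithms of the same function differ by a constant on a connected intersection, so they
can be glued. -/
theorem union (hX : HasLogRatio X p q) (hY : HasLogRatio Y p q) (hXc : IsClosed X)
    (hYc : IsClosed Y) (hXY : IsPreconnected (X ∩ Y)) : HasLogRatio (X ∪ Y) p q := by
  classical
  obtain ⟨g, hg, hgX⟩ := hX
  obtain ⟨g', hg', hgY⟩ := hY
  have hexp : ∀ z ∈ X ∩ Y, Complex.exp (g z - g' z) = 1 := fun z hz => by
    rw [Complex.exp_sub, hgX z hz.1, ← hgY z hz.2, div_self (Complex.exp_ne_zero _)]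
  obtain ⟨c, hc, hgc⟩ : ∃ c, Complex.exp c = 1 ∧ ∀ z ∈ X ∩ Y, g z = g' z + c := by
    rcases (X ∩ Y).eq_empty_or_nonempty with hempty | ⟨w, hw⟩
    · exact ⟨0, Complex.exp_zero, by simp [hempty]⟩
    · refine ⟨g w - g' w, hexp w hw, fun z hz => ?_⟩
      rw [← sub_eq_iff_eq_add']
      exact Complex.isCoveringMap_exp.constOn_of_comp hXY
        ((hg.mono inter_subset_left).sub (hg'.mono inter_subset_right))
        (fun a ha b hb => Subtype.ext ((hexp a ha).trans (hexp b hb).symm)) hz hw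
  have heqX : EqOn (X.piecewise g (fun z => g' z + c)) g X := piecewise_eqOn X _ _
  have heqY : EqOn (X.piecewise g (fun z => g' z + c)) (fun z => g' z + c) Y := fun z hz => by
    by_cases hzX : z ∈ X
    · rw [heqX hzX, hgc z ⟨hzX, hz⟩]
    · exact piecewise_eq_of_notMem _ _ _ hzX
  refine ⟨_, ContinuousOn.union_of_isClosed (hg.congr heqX)
    ((hg'.add continuousOn_const).congr heqY) hXc hYc, ?_⟩
  rintro z (hz | hz)
  · rw [heqX hz, hgX z hz]
  · rw [heqY hz, Complex.exp_add, hgY z hz, hc, mul_one]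

end HasLogRatio

theorem hasLogRatio_of_dist_lt {X : Set ℂ} {p q : ℂ} (h : ∀ z ∈ X, dist p q < dist z q) :
    HasLogRatio X p q := by
  have hne : ∀ z ∈ X, z - q ≠ 0 := fun z hz =>
    sub_ne_zero.2 (dist_pos.1 (dist_nonneg.trans_lt (h z hz)))
  have hslit : ∀ z ∈ X, (z - p) / (z - q) ∈ Complex.slitPlane := fun z hz => by
    have hsplit : (z - p) / (z - q) = 1 + (q - p) / (z - q) := by
      field_simp [hne z hz]
      ring
    rw [hsplit]
    apply Complex.mem_slitPlane_of_norm_lt_one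
    rw [norm_div, div_lt_one (norm_pos_iff.2 (hne z hz)), ← dist_eq_norm, ← dist_eq_norm, dist_comm]
    exact h z hz
  exact ⟨fun z => Complex.log ((z - p) / (z - q)),
    ContinuousOn.clog (ContinuousOn.div (by fun_prop) (by fun_prop) hne) hslit,
    fun z hz => Complex.exp_log (Complex.slitPlane_ne_zero (hslit z hz))⟩

theorem hasLogRatio_of_isPreconnected {X S : Set ℂ} (hX : IsClosed X) (hS : IsPreconnected S)
    (hd : Disjoint S X) {p q : ℂ} (hp : p ∈ S) (hq : q ∈ S) : HasLogRatio X p q := by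
  refine hS.induction₂ (HasLogRatio X) (fun x hx => ?_) (fun _ _ _ _ _ _ => .trans)
    (fun _ _ _ _ => .symm) hp hq
  obtain ⟨ε, hε, hb⟩ := Metric.isOpen_iff.1 hX.isOpen_compl x (disjoint_left.1 hd hx)
  filter_upwards [nhdsWithin_le_nhds (Metric.ball_mem_nhds x hε)] with y hy
  refine (hasLogRatio_of_dist_lt fun z hz => ?_).symm
  exact (Metric.mem_ball.1 hy).trans_le (not_lt.1 fun hzx => hb hzx hz)

theorem hasLogRatio_of_tietzeExtension {Y : Set ℂ} (hY : IsClosed Y) [TietzeExtension.{0} Y]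
    {p q : ℂ} (hp : p ∉ Y) (hq : q ∉ Y) : HasLogRatio Y p q := by
  obtain ⟨ρ, hρ⟩ := ContinuousMap.exists_restrict_eq hY (ContinuousMap.id Y)
  have hρY : ∀ z ∈ Y, (ρ z : ℂ) = z := fun z hz =>
    congrArg Subtype.val (DFunLike.congr_fun hρ ⟨z, hz⟩)
  have hne {s : ℂ} (hs : s ∉ Y) (z : ℂ) : (ρ z : ℂ) - s ≠ 0 :=
    sub_ne_zero.2 fun h => hs (h ▸ (ρ z).2)
  obtain ⟨k, hk⟩ := exists_continuous_log
    ⟨fun z => ((ρ z : ℂ) - p) / (ρ z - q), Continuous.div (by fun_prop) (by fun_prop) (hne hq)⟩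
    fun z => div_ne_zero (hne hp z) (hne hq z)
  exact ⟨k, k.continuous.continuousOn, fun z hz => by rw [hk, ContinuousMap.coe_mk, hρY z hz]⟩

/-- Extending the logarithm over `R` yields a map of the plane that equals `z - p` off `R` and has
no zeros. -/
theorem not_hasLogRatio_of_frontier_subset {Z R : Set ℂ} {p q : ℂ} (hZ : IsClosed Z)
    (hR : Bornology.IsBounded R) (hRZ : frontier R ⊆ Z) (hp : p ∈ R)
    (hq : q ∉ closure R) : ¬ HasLogRatio Z p q := by
  classical
  intro hlog
  have hne {z : ℂ} (hz : z ∈ Z) := hlog.sub_right_ne_zero hz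
  obtain ⟨g, hg, hgZ⟩ := hlog
  obtain ⟨G, hG⟩ := ContinuousMap.exists_restrict_eq hZ ⟨Z.domRestrict g, hg.domRestrict⟩
  have hGZ : ∀ z ∈ Z, (z - q) * Complex.exp (G z) = z - p := fun z hz => by
    have hGg : G z = g z := DFunLike.congr_fun hG ⟨z, hz⟩
    rw [hGg, hgZ z hz, mul_div_cancel₀ _ (hne hz)]
  obtain ⟨r, hr⟩ := hR.subset_ball p
  obtain ⟨z, hz⟩ := exists_eq_zero_of_eq_sub_on_sphere
    (h := R.piecewise (fun z => (z - q) * Complex.exp (G z)) (fun z => z - p))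
    (Continuous.piecewise (fun z hz => hGZ z (hRZ hz)) (by fun_prop) (by fun_prop))
    (Metric.pos_of_mem_ball (hr hp))
    (fun z hz => piecewise_eq_of_notMem _ _ _ fun hzR => (Metric.mem_ball.1 (hr hzR)).ne hz)
  by_cases hzR : z ∈ R
  · rw [piecewise_eq_of_mem _ _ _ hzR, mul_eq_zero, sub_eq_zero] at hz
    exact hq (hz.resolve_right (Complex.exp_ne_zero _) ▸ subset_closure hzR)
  · rw [piecewise_eq_of_notMem _ _ _ hzR, sub_eq_zero] at hz
    exact hzR (hz ▸ hp)

theorem complex_mem_closure_of_frontier_subset_union {X Y R S : Set ℂ} {p q : ℂ} (hX : IsClosed X)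
    (hY : IsClosed Y) [TietzeExtension.{0} Y] (hXY : IsPreconnected (X ∩ Y))
    (hS : IsPreconnected S) (hSX : Disjoint S X) (hpS : p ∈ S) (hqS : q ∈ S) (hpY : p ∉ Y)
    (hqY : q ∉ Y) (hR : Bornology.IsBounded R) (hRXY : frontier R ⊆ X ∪ Y) (hp : p ∈ R) :
    q ∈ closure R := by
  by_contra hq
  exact not_hasLogRatio_of_frontier_subset (hX.union hY) hR hRXY hp hq
    ((hasLogRatio_of_isPreconnected hX hS hSX hpS hqS).union
      (hasLogRatio_of_tietzeExtension hY hpY hqY) hX hY hXY)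

/-- Janiszewski's theorem for an absolute retract `A`: a bounded set `R` whose frontier avoids
`U \ A` cannot split a connected subset of `U` away from `A`, as `A \ U` is connected. -/
theorem frontier_inter_diff_nonempty {E : Type*} [NormedAddCommGroup E] [NormedSpace ℝ E]
    (hE : Module.finrank ℝ E = 2) {U A R S : Set E} (hU : IsOpen U) (hA : IsClosed A)
    [TietzeExtension.{0} A] (hAU : IsPreconnected (A \ U)) (hS : IsPreconnected S) (hSU : S ⊆ U)
    (hR : Bornology.IsBounded R) (hp : ((S ∩ R) \ A).Nonempty)
    (hq : (S \ (closure R ∪ A)).Nonempty) : (frontier R ∩ (U \ A)).Nonempty := by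
  obtain ⟨p, ⟨hpS, hpR⟩, hpA⟩ := hp
  obtain ⟨q, hqS, hq⟩ := hq
  rw [mem_union, not_or] at hq
  by_contra hempty
  have : FiniteDimensional ℝ E := Module.finite_of_finrank_eq_succ hE
  let e : E ≃L[ℝ] ℂ := .ofFinrankEq (hE.trans Complex.finrank_real_complex.symm)
  have : TietzeExtension.{0} (e '' A) := .of_homeo (e.toHomeomorph.image A).symm
  have hmem {s : Set E} {w : E} : e w ∈ e '' s ↔ w ∈ s := e.injective.mem_set_image
  refine hq.1 (hmem.1 (e.image_closure R ▸ complex_mem_closure_of_frontier_subset_union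
    (X := e '' Uᶜ) (Y := e '' A) (R := e '' R) (S := e '' S) (p := e p) (q := e q)
    (e.toHomeomorph.isClosedMap _ hU.isClosed_compl) (e.toHomeomorph.isClosedMap _ hA) ?_
    (hS.image e e.continuous.continuousOn)
    ((disjoint_image_iff e.injective).2 (disjoint_compl_right_iff_subset.2 hSU))
    (hmem.2 hpS) (hmem.2 hqS) (mt hmem.1 hpA) (mt hmem.1 hq.2)
    ((e : E →L[ℝ] ℂ).lipschitz.isBounded_image hR) ?_ (hmem.2 hpR)))
  · rw [← image_inter e.injective, inter_comm, ← Set.sdiff_eq]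
    exact hAU.image e e.continuous.continuousOn
  · rw [← image_union]
    refine (e.toHomeomorph.image_frontier R).symm.subset.trans (image_mono fun w hw => ?_)
    by_contra hn
    exact hempty ⟨w, hw, by simpa [not_or] using hn⟩

/-! ### Arcs and the points they reach -/

section Arcs

variable {X : Type*} [TopologicalSpace X] {x y z : X}

/-- An arc from `x` to `y`, as a path without self-intersections. -/
def IsArc (γ : Path x y) : Prop :=
  Function.Injective γ

namespace IsArc

theorem symm {γ : Path x y} (h : IsArc γ) : IsArc γ.symm :=
  h.comp unitInterval.symm_bijective.injective

theorem trans {γ₁ : Path x y} {γ₂ : Path y z} (h₁ : IsArc γ₁) (h₂ : IsArc γ₂)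
    (h : range γ₁ ∩ range γ₂ ⊆ {y}) : IsArc (γ₁.trans γ₂) := by
  have hmeet {s t : I} (hst : γ₁ s = γ₂ t) : s = 1 ∧ t = 0 := by
    have hy : γ₁ s = y := h ⟨mem_range_self s, t, hst.symm⟩
    exact ⟨h₁ (hy.trans γ₁.target.symm), h₂ ((hst.symm.trans hy).trans γ₂.source.symm)⟩
  intro s t hst
  rw [Path.trans_apply, Path.trans_apply] at hst
  split_ifs at hst with hs ht ht
  · have := congrArg Subtype.val (h₁ hst)
    exact Subtype.ext (by simpa using this)
  · have := congrArg Subtype.val (hmeet hst).2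
    simp only [Icc.coe_zero] at this
    linarith
  · have := congrArg Subtype.val (hmeet hst.symm).2
    simp only [Icc.coe_zero] at this
    linarith
  · have := congrArg Subtype.val (h₂ hst)
    exact Subtype.ext (by simpa using this)

theorem exists_subarc {γ : Path x y} (h : IsArc γ) {s t : I} (hst : s ≠ t) {u v : X}
    (hu : γ s = u) (hv : γ t = v) : ∃ δ : Path u v, IsArc δ ∧ range δ = γ '' uIcc s t := by
  subst hu hv
  refine ⟨γ.subpath s t, h.comp fun a b hab => ?_, γ.range_subpath s t⟩
  have hval := congrArg Subtype.val hab
  have hne : (t : ℝ) - s ≠ 0 := sub_ne_zero.2 (Subtype.coe_injective.ne hst.symm)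
  simp only [Icc.convexComb] at hval
  exact Subtype.ext (mul_left_cancel₀ hne (by linear_combination hval))

theorem ne {γ : Path x y} (h : IsArc γ) : y ≠ x :=
  fun hyx => one_ne_zero (h (γ.target.trans (hyx.trans γ.source.symm)))

theorem target_mem {γ : Path x y} (h : IsArc γ) {V : Set X} (hV : range γ ⊆ insert x V) : y ∈ V :=
  (hV γ.target_mem_range).resolve_left h.ne

theorem tietzeExtension_range [T2Space X] {γ : Path x y} (h : IsArc γ) :
    TietzeExtension.{0} (range γ) :=
  .of_homeo (γ.continuous.isClosedEmbedding h).isEmbedding.toHomeomorph.symm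

end IsArc

/-- The points of `V` which can be reached from `y` by an arc running in `V` except for its initial
point `y`. -/
def arcReachable (V : Set X) (y : X) : Set X :=
  {z | ∃ δ : Path y z, IsArc δ ∧ range δ ⊆ insert y V}

theorem arcReachable_subset (V : Set X) (y : X) : arcReachable V y ⊆ V := by
  rintro z ⟨δ, hδ, hV⟩
  exact hδ.target_mem hV

theorem arcReachable_inter_nonempty {V O : Set X} (hO : O ∈ 𝓝 y)
    (h : (arcReachable V y).Nonempty) : (arcReachable (V ∩ O) y).Nonempty := by
  obtain ⟨z, δ, hδ, hV⟩ := h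
  have hpre : δ ⁻¹' O ∈ 𝓝 (⊥ : I) := δ.continuous.continuousAt.preimage_mem_nhds (by
    rwa [show (⊥ : I) = 0 from rfl, δ.source])
  obtain ⟨t, ht, htO⟩ := nhds_bot_basis_Iic.mem_iff.1 hpre
  obtain ⟨δ', hδ', hrange⟩ := hδ.exists_subarc (ne_of_lt ht) δ.source rfl
  refine ⟨δ t, δ', hδ', ?_⟩
  rw [hrange, uIcc_of_le bot_le]
  rintro _ ⟨s, hs, rfl⟩
  exact (hV (mem_range_self s)).imp_right fun hsV => ⟨hsV, htO hs.2⟩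

end Arcs

section NormedSpace

variable {E : Type*} [NormedAddCommGroup E] [NormedSpace ℝ E] {y z w : E}

/-- The arc is followed up to its first point `u` in `C`, and then a line segment to `w`. -/
theorem IsArc.exists_redirect {γ : Path y z} (h : IsArc γ) {C : Set E} (hC : IsClosed C)
    (hconv : Convex ℝ C) (hy : y ∉ C) (hz : z ∈ C) (hw : w ∈ C) :
    ∃ u ∈ C ∩ range γ, ∃ δ : Path y w, IsArc δ ∧ range δ ⊆ range γ ∪ segment ℝ u w := by
  obtain ⟨s, hsC, hmin⟩ := (hC.preimage γ.continuous).isCompact.exists_isLeast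
    ⟨1, mem_preimage.2 (γ.target.symm ▸ hz)⟩
  have hs0 : 0 ≠ s := by
    rintro rfl
    exact hy (γ.source ▸ hsC)
  refine ⟨γ s, ⟨hsC, mem_range_self s⟩, ?_⟩
  by_cases hsw : γ s = w
  · obtain ⟨δ, hδ, hrange⟩ := h.exists_subarc hs0 γ.source hsw
    exact ⟨δ, hδ, hrange ▸ (image_subset_range _ _).trans subset_union_left⟩
  obtain ⟨δ, hδ, hrange⟩ := h.exists_subarc hs0 γ.source rfl
  refine ⟨δ.trans (Path.segment (γ s) w), hδ.trans (Path.segment_injective_of_ne hsw) ?_, ?_⟩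
  · rw [hrange, Path.range_segment, uIcc_of_le zero_le]
    rintro _ ⟨⟨t, ht, rfl⟩, htC⟩
    rw [ht.2.antisymm (hmin (hconv.segment_subset hsC hw htC)), mem_singleton_iff]
  · rw [Path.trans_range, Path.range_segment, hrange]
    exact union_subset_union_left _ (image_subset_range _ _)

theorem disjoint_frontier_arcReachable {V : Set E} (hV : IsOpen V) (hy : y ∉ V) :
    Disjoint (frontier (arcReachable V y)) V := by
  rw [disjoint_left]
  rintro w ⟨hwc, hwi⟩ hwV
  obtain ⟨r, hr, hrV⟩ := Metric.nhds_basis_closedBall.mem_iff.1 (hV.mem_nhds hwV)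
  obtain ⟨z, ⟨δ, hδ, hδV⟩, hzw⟩ := Metric.mem_closure_iff.1 hwc r hr
  refine hwi (mem_interior_iff_mem_nhds.2 ?_)
  filter_upwards [Metric.closedBall_mem_nhds w hr] with v hv
  obtain ⟨u, hu, δ', hδ', hδ'V⟩ := hδ.exists_redirect Metric.isClosed_closedBall
    (convex_closedBall w r) (mt (@hrV y) hy) (Metric.mem_closedBall'.2 hzw.le) hv
  have hseg : segment ℝ u v ⊆ V := ((convex_closedBall w r).segment_subset hu.1 hv).trans hrV
  exact ⟨δ', hδ', hδ'V.trans (union_subset hδV (hseg.trans (subset_insert y V)))⟩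

theorem exists_isArc_of_mem_closure_arcReachable {Q W : Set E} (hQc : IsClosed Q)
    (hQ : Convex ℝ Q) (hW : W ∈ 𝓝 w) (hwQ : w ∈ Q) (hwy : w ≠ y)
    (hw : w ∈ closure (arcReachable (W ∩ interior Q) y)) :
    ∃ δ : Path y w, IsArc δ ∧ range δ ⊆ insert y (insert w (W ∩ interior Q)) := by
  obtain ⟨r, hr, hrW⟩ := Metric.nhds_basis_closedBall.mem_iff.1
    (inter_mem hW (isOpen_ne.mem_nhds hwy))
  obtain ⟨z, ⟨δ, hδ, hδW⟩, hzw⟩ := Metric.mem_closure_iff.1 hw r hr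
  have hwC : w ∈ Metric.closedBall w r ∩ Q := ⟨Metric.mem_closedBall_self hr.le, hwQ⟩
  have hyC : y ∉ Metric.closedBall w r ∩ Q := fun hyC => (hrW hyC.1).2 rfl
  obtain ⟨u, ⟨huC, huδ⟩, δ', hδ', hδ'W⟩ := hδ.exists_redirect (w := w)
    (Metric.isClosed_closedBall.inter hQc) ((convex_closedBall w r).inter hQ) hyC
    ⟨Metric.mem_closedBall'.2 hzw.le, interior_subset (hδ.target_mem hδW).2⟩ hwC
  have huW : u ∈ W ∩ interior Q := (hδW huδ).resolve_left (ne_of_mem_of_not_mem huC hyC)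
  have hseg : openSegment ℝ u w ⊆ W ∩ interior Q := subset_inter
    (fun v hv => (hrW ((convex_closedBall w r).openSegment_subset huC.1 hwC.1 hv)).1)
    (hQ.openSegment_interior_self_subset_interior huW.2 hwQ)
  refine ⟨δ', hδ', hδ'W.trans (union_subset
    (hδW.trans (insert_subset_insert (subset_insert _ _))) ?_)⟩
  rw [← insert_endpoints_openSegment]
  exact insert_subset (Or.inr (Or.inr huW))
    ((insert_subset_insert hseg).trans (subset_insert _ _))

theorem inter_subset_closure_inter_interior {Q U : Set E} (hQ : Convex ℝ Q)
    (hint : (interior Q).Nonempty) (hU : IsOpen U) : U ∩ Q ⊆ closure (U ∩ interior Q) := by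
  refine (inter_subset_inter_right U ?_).trans hU.inter_closure
  rw [hQ.closure_interior_eq_closure_of_nonempty_interior hint]
  exact subset_closure

theorem isPreconnected_inter_interior {Q U : Set E} (hQ : Convex ℝ Q)
    (hint : (interior Q).Nonempty) (hU : IsOpen U) (hUQ : IsPreconnected (U ∩ Q)) :
    IsPreconnected (U ∩ interior Q) := by
  intro u v hu hv huv hFu hFv
  have hsub {s : Set E} : U ∩ interior Q ∩ s ⊆ U ∩ Q ∩ closure (U ∩ interior Q ∩ s) := fun z hz =>
    ⟨⟨hz.1.1, interior_subset hz.1.2⟩, subset_closure hz⟩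
  obtain ⟨w, hwU, hwu, hwv⟩ := isPreconnected_closed_iff.1 hUQ
    (closure (U ∩ interior Q ∩ u)) (closure (U ∩ interior Q ∩ v)) isClosed_closure isClosed_closure
    (by rw [← closure_union, ← inter_union_distrib_left, inter_eq_self_of_subset_left huv]
        exact inter_subset_closure_inter_interior hQ hint hU)
    (hFu.mono hsub) (hFv.mono hsub)
  obtain ⟨r, hr, hrU⟩ := Metric.isOpen_iff.1 hU w hwU.1
  have hmeet {s : Set E} (hws : w ∈ closure (U ∩ interior Q ∩ s)) :
      (Metric.ball w r ∩ interior Q ∩ s).Nonempty := by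
    obtain ⟨z, hzr, hz⟩ := mem_closure_iff.1 hws _ Metric.isOpen_ball (Metric.mem_ball_self hr)
    exact ⟨z, ⟨hzr, hz.1.2⟩, hz.2⟩
  have hF : Metric.ball w r ∩ interior Q ⊆ U ∩ interior Q := inter_subset_inter_left _ hrU
  exact (((convex_ball w r).inter hQ.interior).isPreconnected u v hu hv (hF.trans huv)
    (hmeet hwu) (hmeet hwv)).mono (inter_subset_inter_left _ hF)

end NormedSpace

/-! ### Arcs in a planar convex body -/

section Planar

variable {E : Type*} [NormedAddCommGroup E] [NormedSpace ℝ E] {Q : Set E} {f₀ x y : E}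

/-- Points just outside `Q` near `f₀` are connected to `R` within `U`, so they would be separated
from it by `Uᶜ ∪ range ψ`. -/
theorem frontier_inter_diff_range_nonempty (hE : Module.finrank ℝ E = 2) (hQ : IsCompact Q)
    {U R : Set E} (hU : IsOpen U) (hUQ : IsPreconnected (U ∩ Q)) {ψ : Path f₀ x} (hψ : IsArc ψ)
    (hf₀ : f₀ ∈ frontier Q) (hψQ : range ψ ⊆ Q) (hψU : range ψ ⊆ insert x U) (hR : R.Nonempty)
    (hRU : R ⊆ (U ∩ Q) \ range ψ) : (frontier R ∩ (U \ range ψ)).Nonempty := by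
  have hRQ : closure R ⊆ Q := closure_minimal (fun z hz => (hRU hz).1.2) hQ.isClosed
  have hf₀U : f₀ ∈ U := (hψU ψ.source_mem_range).resolve_left hψ.ne.symm
  obtain ⟨p, hp⟩ := hR
  obtain ⟨r, hr, hrU⟩ := Metric.isOpen_iff.1 hU f₀ hf₀U
  obtain ⟨q, hqr, hqQ⟩ : (Metric.ball f₀ r ∩ Qᶜ).Nonempty := mem_closure_iff.1
    (frontier_eq_closure_inter_closure.subset hf₀).2 _ Metric.isOpen_ball (Metric.mem_ball_self hr)
  have hψsub : (range ψ \ U).Subsingleton :=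
    subsingleton_singleton.anti (sdiff_subset_iff.2 (union_singleton ▸ hψU))
  have hS : IsPreconnected (U ∩ Q ∪ Metric.ball f₀ r) :=
    hUQ.union f₀ ⟨hf₀U, hψQ ψ.source_mem_range⟩ (Metric.mem_ball_self hr)
      (convex_ball f₀ r).isPreconnected
  have := hψ.tietzeExtension_range
  exact frontier_inter_diff_nonempty hE hU (isCompact_range ψ.continuous).isClosed
    hψsub.isPreconnected hS (union_subset inter_subset_left hrU)
    (hQ.isBounded.subset (subset_closure.trans hRQ)) ⟨p, ⟨Or.inl (hRU hp).1, hp⟩, (hRU hp).2⟩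
    ⟨q, Or.inr hqr, fun hq => hqQ (union_subset hRQ hψQ hq)⟩

theorem exists_isArc_to_frontier_disjoint (hE : Module.finrank ℝ E = 2) (hQc : IsCompact Q)
    (hQ : Convex ℝ Q) {U : Set E} (hU : IsOpen U) (hUQ : IsPreconnected (U ∩ Q))
    {ψ : Path f₀ x} (hψ : IsArc ψ) (hf₀ : f₀ ∈ frontier Q) (hψQ : range ψ ⊆ Q)
    (hψU : range ψ ⊆ insert x U) (hyQ : y ∈ interior Q) (hyU : y ∉ U) (hyx : y ≠ x)
    (hy : (arcReachable U y).Nonempty) :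
    ∃ f ∈ frontier Q, ∃ δ : Path y f, IsArc δ ∧ range δ ⊆ insert y U ∩ insert f (interior Q) ∧
      Disjoint (range δ) (range ψ) := by
  have hψc : IsClosed (range ψ) := (isCompact_range ψ.continuous).isClosed
  have hyψ : y ∉ range ψ := fun h => (hψU h).elim hyx hyU
  set R := arcReachable ((U \ range ψ) ∩ interior Q) y with hR
  have hRV : R ⊆ (U \ range ψ) ∩ interior Q := arcReachable_subset _ _
  have hRne : R.Nonempty := by
    rw [hR, Set.sdiff_eq, inter_assoc]
    exact arcReachable_inter_nonempty
      (inter_mem (hψc.isOpen_compl.mem_nhds hyψ) (isOpen_interior.mem_nhds hyQ)) hy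
  obtain ⟨w, hwR, hw⟩ := frontier_inter_diff_range_nonempty hE hQc hU hUQ hψ hf₀ hψQ hψU hRne
    fun z hz => ⟨⟨(hRV hz).1.1, interior_subset (hRV hz).2⟩, (hRV hz).1.2⟩
  have hwQ : w ∈ Q :=
    closure_minimal (fun z hz => interior_subset (hRV hz).2) hQc.isClosed hwR.1
  have hwi : w ∉ interior Q := fun hwi => disjoint_left.1 (disjoint_frontier_arcReachable
    ((hU.sdiff hψc).inter isOpen_interior) fun hyV => hyU hyV.1.1) hwR ⟨hw, hwi⟩
  obtain ⟨δ, hδ, hδV⟩ := exists_isArc_of_mem_closure_arcReachable hQc.isClosed hQ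
    ((hU.sdiff hψc).mem_nhds hw) hwQ (ne_of_mem_of_not_mem hyQ hwi).symm hwR.1
  refine ⟨w, ⟨subset_closure hwQ, hwi⟩, δ, hδ, fun v hv => ?_, disjoint_left.2 fun v hv => ?_⟩
  · rcases hδV hv with rfl | rfl | hvV
    · exact ⟨Or.inl rfl, Or.inr hyQ⟩
    · exact ⟨Or.inr hw.1, Or.inl rfl⟩
    · exact ⟨Or.inr hvV.1.1, Or.inr hvV.2⟩
  · rcases hδV hv with rfl | rfl | hvV
    exacts [hyψ, hw.2, hvV.1.2]

theorem exists_isArc_to_relative_frontier_disjoint (hE : Module.finrank ℝ E = 2)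
    (hQc : IsCompact Q) (hQ : Convex ℝ Q) {D Ω : Set E} (hD : ∃ U, IsOpen U ∧ D = U ∩ Q)
    (hDc : IsPreconnected D) (hΩ : IsOpen Ω) (hQΩ : interior Q ⊆ Ω) {ψ : Path f₀ x}
    (hψ : IsArc ψ) (hf₀ : f₀ ∈ frontier Q) (hxQ : x ∈ Q) (hψD : range ψ ⊆ insert x (D ∩ Ω))
    (hyQ : y ∈ interior Q) (hyD : y ∉ D) (hyx : y ≠ x) (hy : (arcReachable D y).Nonempty) :
    ∃ f ∈ D ∩ Ω ∩ frontier Q, ∃ δ : Path y f, IsArc δ ∧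
      range δ ⊆ insert y D ∩ insert f (interior Q) ∧ Disjoint (range δ) (range ψ) := by
  obtain ⟨U, hU, rfl⟩ := hD
  have hUΩ : U ∩ Q ∩ Ω ⊆ U ∩ Ω := inter_subset_inter_left _ inter_subset_left
  have hUΩQ : IsPreconnected (U ∩ Ω ∩ Q) :=
    (isPreconnected_inter_interior hQ ⟨y, hyQ⟩ hU hDc).subset_closure
      (fun z hz => ⟨⟨hz.1, hQΩ hz.2⟩, interior_subset hz.2⟩)
      ((inter_subset_inter_left _ inter_subset_left).trans
        (inter_subset_closure_inter_interior hQ ⟨y, hyQ⟩ hU))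
  have hyUΩ : (arcReachable (U ∩ Ω) y).Nonempty := by
    obtain ⟨z, δ, hδ, hδU⟩ := arcReachable_inter_nonempty (isOpen_interior.mem_nhds hyQ) hy
    exact ⟨z, δ, hδ, hδU.trans
      (insert_subset_insert ((inter_subset_inter_right _ hQΩ).trans hUΩ))⟩
  obtain ⟨f, hf, δ, hδ, hδU, hδψ⟩ := exists_isArc_to_frontier_disjoint hE hQc hQ (hU.inter hΩ)
    hUΩQ hψ hf₀ (hψD.trans (insert_subset hxQ fun z hz => hz.1.2))
    (hψD.trans (insert_subset_insert hUΩ)) hyQ (fun h => hyD ⟨h.1, interior_subset hyQ⟩) hyx hyUΩ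
  have hfQ : f ∈ Q := hQc.isClosed.frontier_subset hf
  have hfU : f ∈ U ∩ Ω := hδ.target_mem (hδU.trans inter_subset_left)
  refine ⟨f, ⟨⟨⟨hfU.1, hfQ⟩, hfU.2⟩, hf⟩, δ, hδ, fun v hv => ⟨?_, (hδU hv).2⟩, hδψ⟩
  exact (hδU hv).1.imp_right fun hvU => ⟨hvU.1, insert_subset hfQ interior_subset (hδU hv).2⟩

end Planar

/-! ### Crosscuts of the square -/

theorem interior_unitSq : interior unitSq = Ioo 0 1 ×ˢ Ioo 0 1 := by
  rw [unitSq, Icc_prod_eq, interior_prod_eq, interior_Icc]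

theorem mem_frontier_unitSq {p : ℝ × ℝ} :
    p ∈ frontier unitSq ↔ p ∈ unitSq ∧ p ∉ Ioo (0 : ℝ) 1 ×ˢ Ioo (0 : ℝ) 1 := by
  rw [unitSq, isClosed_Icc.frontier_eq, ← unitSq, interior_unitSq, Set.mem_sdiff]

theorem frontier_unitSq_inter_prod_Iio : frontier unitSq ∩ Ioo 0 1 ×ˢ Iio 1 = botEdge := by
  ext ⟨u, v⟩
  rw [mem_inter_iff, mem_frontier_unitSq]
  constructor
  · rintro ⟨⟨hQ, hn⟩, hu, hv⟩
    exact ⟨hu, by_contra fun hv0 => hn ⟨hu, lt_of_le_of_ne' hQ.1.2 hv0, hv⟩⟩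
  · rintro ⟨hu, rfl : v = 0⟩
    exact ⟨⟨⟨⟨hu.1.le, le_rfl⟩, hu.2.le, zero_le_one⟩, fun h => h.2.1.false⟩, hu,
      mem_Iio.2 zero_lt_one⟩

theorem frontier_unitSq_inter_prod_Ioi : frontier unitSq ∩ Ioo 0 1 ×ˢ Ioi 0 = topEdge := by
  ext ⟨u, v⟩
  rw [mem_inter_iff, mem_frontier_unitSq]
  constructor
  · rintro ⟨⟨hQ, hn⟩, hu, hv⟩
    exact ⟨hu, by_contra fun hv1 => hn ⟨hu, hv, lt_of_le_of_ne hQ.2.2 hv1⟩⟩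
  · rintro ⟨hu, rfl : v = 1⟩
    exact ⟨⟨⟨⟨hu.1.le, zero_le_one⟩, hu.2.le, le_rfl⟩, fun h => h.2.2.false⟩, hu,
      mem_Ioi.2 zero_lt_one⟩

theorem Accessible.mem_closure {X : Type*} [TopologicalSpace X] {U : Set X} {x : X}
    (h : Accessible U x) : x ∈ closure U := by
  obtain ⟨φ, -, -, hcl, -, rfl⟩ := h
  exact hcl 1

theorem Accessible.arcReachable_nonempty {X : Type*} [TopologicalSpace X] {U : Set X} {x : X}
    (h : Accessible U x) : (arcReachable U x).Nonempty := by
  obtain ⟨φ, hφ, hinj, -, hU, rfl⟩ := h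
  let γ : Path (φ 0) (φ 1) := ⟨⟨φ, hφ⟩, rfl, rfl⟩
  have hγ : IsArc γ := hinj
  refine ⟨φ 0, γ.symm, hγ.symm, ?_⟩
  rw [Path.symm_range]
  rintro _ ⟨t, rfl⟩
  exact t.2.2.eq_or_lt.imp (fun ht => congrArg φ (Subtype.ext ht)) (hU t)

theorem notMem_of_mem_closure_of_disjoint {X : Type*} [TopologicalSpace X] {Q D D' : Set X} {y : X}
    (hD : ∃ U, IsOpen U ∧ D = U ∩ Q) (hD' : D' ⊆ Q) (hdisj : Disjoint D D')
    (hy : y ∈ closure D') : y ∉ D := by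
  obtain ⟨U, hU, rfl⟩ := hD
  intro hyD
  obtain ⟨z, hzU, hz⟩ := mem_closure_iff.1 hy U hU hyD.1
  exact disjoint_left.1 hdisj ⟨hzU, hD' hz⟩ hz

namespace IsCrosscut

variable {D₁ D₂ s : Set (ℝ × ℝ)} {x y : ℝ × ℝ} {φ : unitInterval → ℝ × ℝ}

theorem mem_unitSq (h : IsCrosscut D₁ D₂ x φ) : x ∈ unitSq :=
  h.2.2.2.2.1 ▸ interior_subset (h.2.2.2.2.2.1 half one_half_pos one_half_lt_one)

theorem exists_isArc_lower (h : IsCrosscut D₁ D₂ x φ) :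
    ∃ γ : Path (φ 0) x, IsArc γ ∧ range γ = φ '' Iic half ∧
      range γ ⊆ insert x (D₁ ∩ Ioo 0 1 ×ˢ Iio 1) := by
  obtain ⟨hc, hinj, hbot, -, hx, hint, hlow, -⟩ := h
  let ψ : Path (φ 0) (φ 1) := ⟨⟨φ, hc⟩, rfl, rfl⟩
  have hψ : IsArc ψ := hinj
  have hhalf : (0 : I) < half := show (0 : ℝ) < 1 / 2 by norm_num
  obtain ⟨γ, hγ, hrange⟩ := hψ.exists_subarc hhalf.ne rfl hx
  have hIic : Icc 0 half = Iic half := Icc_bot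
  rw [uIcc_of_le hhalf.le, hIic] at hrange
  refine ⟨γ, hγ, hrange, hrange.subset.trans ?_⟩
  rintro _ ⟨t, ht, rfl⟩
  rcases (mem_Iic.1 ht).eq_or_lt with rfl | ht
  · exact Or.inl hx
  refine Or.inr ⟨hlow t ht, ?_⟩
  rcases t.2.1.eq_or_lt with h0 | h0
  · obtain rfl : 0 = t := Subtype.ext h0
    exact (frontier_unitSq_inter_prod_Iio.symm.subset hbot).2
  · have hmem := interior_unitSq.subset (hint t h0 ((Subtype.coe_lt_coe.2 ht).trans_le half.2.2))
    exact ⟨hmem.1, hmem.2.2⟩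

theorem exists_isArc_upper (h : IsCrosscut D₁ D₂ x φ) :
    ∃ γ : Path (φ 1) x, IsArc γ ∧ range γ = φ '' Ici half ∧
      range γ ⊆ insert x (D₂ ∩ Ioo 0 1 ×ˢ Ioi 0) := by
  obtain ⟨hc, hinj, -, htop, hx, hint, -, hupp⟩ := h
  let ψ : Path (φ 0) (φ 1) := ⟨⟨φ, hc⟩, rfl, rfl⟩
  have hψ : IsArc ψ := hinj
  have hhalf : half < (1 : I) := show (1 / 2 : ℝ) < 1 by norm_num
  obtain ⟨γ, hγ, hrange⟩ := hψ.exists_subarc hhalf.ne' rfl hx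
  have hIci : Icc half 1 = Ici half := Icc_top
  rw [uIcc_of_ge hhalf.le, hIci] at hrange
  refine ⟨γ, hγ, hrange, hrange.subset.trans ?_⟩
  rintro _ ⟨t, ht, rfl⟩
  rcases (mem_Ici.1 ht).eq_or_lt with rfl | ht
  · exact Or.inl hx
  refine Or.inr ⟨hupp t ht, ?_⟩
  rcases t.2.2.eq_or_lt with h1 | h1
  · obtain rfl : t = 1 := Subtype.ext h1
    exact (frontier_unitSq_inter_prod_Ioi.symm.subset htop).2
  · have hmem := interior_unitSq.subset (hint t (half.2.1.trans_lt ht) h1)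
    exact ⟨hmem.1, hmem.2.1⟩

theorem disjoint_range_of_lower (h : IsCrosscut D₁ D₂ x φ) (hs : Disjoint s (φ '' Iic half))
    (hs₂ : Disjoint s D₂) : Disjoint s (range φ) := by
  rw [← image_univ, ← Iic_union_Ioi, image_union, disjoint_union_right]
  exact ⟨hs, hs₂.mono_right (image_subset_iff.2 h.2.2.2.2.2.2.2)⟩

theorem disjoint_range_of_upper (h : IsCrosscut D₁ D₂ x φ) (hs : Disjoint s (φ '' Ici half))
    (hs₁ : Disjoint s D₁) : Disjoint s (range φ) := by
  rw [← image_univ, ← Iio_union_Ici, image_union, disjoint_union_right]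
  exact ⟨hs₁.mono_right (image_subset_iff.2 fun t (ht : t < half) => h.2.2.2.2.2.2.1 t ht), hs⟩

theorem exists_isArc_to_botEdge (h : IsCrosscut D₁ D₂ x φ) (hd : Disjoint D₁ D₂)
    (hD₁ : ∃ U, IsOpen U ∧ D₁ = U ∩ unitSq) (hc₁ : IsPreconnected D₁) (hy : y ∈ interior unitSq)
    (hyD₁ : y ∉ D₁) (hyD₂ : y ∉ D₂) (hyx : y ≠ x) (hacc : Accessible D₁ y) :
    ∃ f ∈ botEdge, ∃ δ : Path y f, IsArc δ ∧
      range δ ⊆ insert y D₁ ∩ insert f (interior unitSq) ∧ Disjoint (range δ) (range φ) := by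
  have hbot := frontier_unitSq_inter_prod_Iio.symm.subset h.2.2.1
  have hint : interior unitSq ⊆ Ioo 0 1 ×ˢ Iio 1 :=
    interior_unitSq.subset.trans (prod_mono subset_rfl Ioo_subset_Iio_self)
  obtain ⟨ψ, hψ, hrange, hψD₁⟩ := h.exists_isArc_lower
  obtain ⟨f, ⟨⟨-, hfΩ⟩, hf⟩, δ, hδ, hδD₁, hδψ⟩ := exists_isArc_to_relative_frontier_disjoint
    (by simp) isCompact_Icc (convex_Icc _ _) hD₁ hc₁ (isOpen_Ioo.prod isOpen_Iio) hint hψ hbot.1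
    h.mem_unitSq hψD₁ hy hyD₁ hyx hacc.arcReachable_nonempty
  have hδD₂ : Disjoint (range δ) D₂ :=
    (disjoint_insert_left.2 ⟨hyD₂, hd⟩).mono_left (hδD₁.trans inter_subset_left)
  exact ⟨f, frontier_unitSq_inter_prod_Iio.subset ⟨hf, hfΩ⟩, δ, hδ, hδD₁,
    h.disjoint_range_of_lower (hrange ▸ hδψ) hδD₂⟩

theorem exists_isArc_to_topEdge (h : IsCrosscut D₁ D₂ x φ) (hd : Disjoint D₁ D₂)
    (hD₂ : ∃ U, IsOpen U ∧ D₂ = U ∩ unitSq) (hc₂ : IsPreconnected D₂) (hy : y ∈ interior unitSq)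
    (hyD₁ : y ∉ D₁) (hyD₂ : y ∉ D₂) (hyx : y ≠ x) (hacc : Accessible D₂ y) :
    ∃ f ∈ topEdge, ∃ δ : Path y f, IsArc δ ∧
      range δ ⊆ insert y D₂ ∩ insert f (interior unitSq) ∧ Disjoint (range δ) (range φ) := by
  have htop := frontier_unitSq_inter_prod_Ioi.symm.subset h.2.2.2.1
  have hint : interior unitSq ⊆ Ioo 0 1 ×ˢ Ioi 0 :=
    interior_unitSq.subset.trans (prod_mono subset_rfl Ioo_subset_Ioi_self)
  obtain ⟨ψ, hψ, hrange, hψD₂⟩ := h.exists_isArc_upper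
  obtain ⟨f, ⟨⟨-, hfΩ⟩, hf⟩, δ, hδ, hδD₂, hδψ⟩ := exists_isArc_to_relative_frontier_disjoint
    (by simp) isCompact_Icc (convex_Icc _ _) hD₂ hc₂ (isOpen_Ioo.prod isOpen_Ioi) hint hψ htop.1
    h.mem_unitSq hψD₂ hy hyD₂ hyx hacc.arcReachable_nonempty
  have hδD₁ : Disjoint (range δ) D₁ :=
    (disjoint_insert_left.2 ⟨hyD₁, hd.symm⟩).mono_left (hδD₂.trans inter_subset_left)
  exact ⟨f, frontier_unitSq_inter_prod_Ioi.subset ⟨hf, hfΩ⟩, δ, hδ, hδD₂,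
    h.disjoint_range_of_upper (hrange ▸ hδψ) hδD₁⟩

end IsCrosscut

theorem isCrosscut_symm_trans {D₁ D₂ : Set (ℝ × ℝ)} {y f₁ f₂ : ℝ × ℝ} (hd : Disjoint D₁ D₂)
    (hf₁ : f₁ ∈ botEdge) (hf₂ : f₂ ∈ topEdge) {δ₁ : Path y f₁} {δ₂ : Path y f₂}
    (hδ₁ : IsArc δ₁) (hδ₂ : IsArc δ₂)
    (h₁ : range δ₁ ⊆ insert y D₁ ∩ insert f₁ (interior unitSq))
    (h₂ : range δ₂ ⊆ insert y D₂ ∩ insert f₂ (interior unitSq)) :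
    IsCrosscut D₁ D₂ y (δ₁.symm.trans δ₂) := by
  have hinj : IsArc (δ₁.symm.trans δ₂) := hδ₁.symm.trans hδ₂ <| by
    rw [Path.symm_range]
    refine (inter_subset_inter (h₁.trans inter_subset_left) (h₂.trans inter_subset_left)).trans ?_
    rw [← insert_inter_distrib, hd.inter_eq, insert_empty_eq]
  have hhalf : δ₁.symm.trans δ₂ half = y := by
    simp [Path.trans_apply, half]
  refine ⟨Path.continuous _, hinj, by rwa [Path.source], by rwa [Path.target], hhalf,
    fun t h0 h1 => ?_, fun t ht => ?_, fun t ht => ?_⟩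
  · have hmem : δ₁.symm.trans δ₂ t ∈ range δ₁ ∪ range δ₂ := by
      rw [← Path.symm_range, ← Path.trans_range]
      exact mem_range_self t
    rcases hmem.imp (fun ht => (h₁ ht).2) fun ht => (h₂ ht).2 with (hf | hi) | (hf | hi)
    · exact absurd (congrArg Subtype.val (hinj (hf.trans (Path.source _).symm))) h0.ne'
    · exact hi
    · exact absurd (congrArg Subtype.val (hinj (hf.trans (Path.target _).symm))) h1.ne
    · exact hi
  · have hmem : δ₁.symm.trans δ₂ t ∈ range δ₁ := by
      rw [Path.trans_apply, dif_pos ht.le, ← Path.symm_range]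
      exact mem_range_self _
    exact (h₁ hmem).1.resolve_left fun hy =>
      ht.ne (congrArg Subtype.val (hinj (hy.trans hhalf.symm)))
  · have hmem : δ₁.symm.trans δ₂ t ∈ range δ₂ := by
      rw [Path.trans_apply, dif_neg ht.not_ge]
      exact mem_range_self _
    exact (h₂ hmem).1.resolve_left fun hy =>
      ht.ne' (congrArg Subtype.val (hinj (hy.trans hhalf.symm)))

theorem exists_disjoint_crosscut_general {D₁ D₂ : Set (ℝ × ℝ)} (hd : Disjoint D₁ D₂)
    (hD₁ : ∃ U, IsOpen U ∧ D₁ = U ∩ unitSq) (hD₂ : ∃ U, IsOpen U ∧ D₂ = U ∩ unitSq)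
    (hc₁ : IsPreconnected D₁) (hc₂ : IsPreconnected D₂) {x y : ℝ × ℝ}
    (hy : y ∈ interior unitSq) (hy₁ : Accessible D₁ y) (hy₂ : Accessible D₂ y) (hxy : x ≠ y)
    {φx : unitInterval → ℝ × ℝ} (hφx : IsCrosscut D₁ D₂ x φx) :
    ∃ φy : unitInterval → ℝ × ℝ, IsCrosscut D₁ D₂ y φy ∧ range φx ∩ range φy = ∅ := by
  have hsub {D : Set (ℝ × ℝ)} (hD : ∃ U, IsOpen U ∧ D = U ∩ unitSq) : D ⊆ unitSq := by
    obtain ⟨U, -, rfl⟩ := hD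
    exact inter_subset_right
  have hyD₁ : y ∉ D₁ := notMem_of_mem_closure_of_disjoint hD₁ (hsub hD₂) hd hy₂.mem_closure
  have hyD₂ : y ∉ D₂ := notMem_of_mem_closure_of_disjoint hD₂ (hsub hD₁) hd.symm hy₁.mem_closure
  obtain ⟨f₁, hf₁, δ₁, hδ₁, hδD₁, hδφ₁⟩ :=
    hφx.exists_isArc_to_botEdge hd hD₁ hc₁ hy hyD₁ hyD₂ hxy.symm hy₁
  obtain ⟨f₂, hf₂, δ₂, hδ₂, hδD₂, hδφ₂⟩ :=
    hφx.exists_isArc_to_topEdge hd hD₂ hc₂ hy hyD₁ hyD₂ hxy.symm hy₂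
  refine ⟨_, isCrosscut_symm_trans hd hf₁ hf₂ hδ₁ hδ₂ hδD₁ hδD₂, ?_⟩
  rw [← disjoint_iff_inter_eq_empty, Path.trans_range, Path.symm_range, disjoint_union_right]
  exact ⟨hδφ₁.symm, hδφ₂.symm⟩

theorem SqDecomp.mem_interior_unitSq {D₁ D₂ K : Set (ℝ × ℝ)} {a b y : ℝ × ℝ}
    (h : SqDecomp D₁ D₂ K a b) (hy : y ∈ K) (hya : y ≠ a) (hyb : y ≠ b) :
    y ∈ interior unitSq := by
  have hyQ : y ∈ unitSq := h.cover ▸ Or.inr hy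
  exact by_contra fun hyi => (h.bdry.subset ⟨hy, subset_closure hyQ, hyi⟩).elim hya hyb

/-- Given a crosscut through `x`, one can find a crosscut through any other point `y` of
`K \ {a,b}` which is disjoint from it. -/
theorem exists_disjoint_crosscut (D₁ D₂ K : Set (ℝ × ℝ)) (a b : ℝ × ℝ)
    (hdec : SqDecomp D₁ D₂ K a b) (x y : ℝ × ℝ)
    (hx : x ∈ K) (hxa : x ≠ a) (hxb : x ≠ b)
    (hy : y ∈ K) (hya : y ≠ a) (hyb : y ≠ b) (hxy : x ≠ y)
    (φx : unitInterval → ℝ × ℝ) (hφx : IsCrosscut D₁ D₂ x φx) :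
    ∃ φy : unitInterval → ℝ × ℝ, IsCrosscut D₁ D₂ y φy ∧
      Set.range φx ∩ Set.range φy = ∅ := by
  exact exists_disjoint_crosscut_general hdec.disj hdec.open₁ hdec.open₂
    hdec.pconn₁.isConnected.isPreconnected hdec.pconn₂.isConnected.isPreconnected
    (hdec.mem_interior_unitSq hy hya hyb) (hdec.acc₁ y hy) (hdec.acc₂ y hy) hxy hφx
end
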